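/- Let d ≥ 1, 1 ≤ p < 2, 0 < γ < d(1/p − 1/2) and a ≥ 0. There is a constant C depending only on d, γ and p (independent of a) such that for all Schwartz functions f₁, f₂, f₃ on ℝ^d, ‖H_{a,γ}(f₁, f₂, f₃)‖_{L̂^p} ≤ C ‖f₁‖_{L²} ‖f₂‖_{L²} · max(‖f₃‖_{L̂^p}, ‖f₃‖_{L²}). -/

import Mathlib

open MeasureTheory Real FourierTransform
open scoped ENNReal

/-- The Hartree trilinear operator
`H_{a,γ}(f,g,h)(x) = ((e^{-a|·|} |·|^{-γ}) ∗ (f ḡ))(x) · h(x)` on `ℝ^d`. -/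
noncomputable def hartreeOp (d : ℕ) (a γ : ℝ)
    (f g h : EuclideanSpace ℝ (Fin d) → ℂ) : EuclideanSpace ℝ (Fin d) → ℂ :=
  fun x =>
    (∫ y : EuclideanSpace ℝ (Fin d),
      ((Real.exp (-(a * ‖y‖)) * ‖y‖ ^ (-γ) : ℝ) : ℂ) *
        (f (x - y) * (starRingEnd ℂ) (g (x - y)))) * h x


lemma aux_gauss_lint : ∫⁻ u : ℝ, ENNReal.ofReal (Real.exp (-u ^ 2)) = ENNReal.ofReal (√π) := by
  have h := integral_gaussian 1
  have hi := integrable_exp_neg_mul_sq (b := 1) one_pos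
  rw [← ofReal_integral_eq_lintegral_ofReal]
  · simp at h; rw [h]
  · simpa using hi
  · exact Filter.Eventually.of_forall fun x => (Real.exp_pos _).le

lemma aux_sub_zero : ∫⁻ v in Set.Ioi (0:ℝ), ENNReal.ofReal (Real.exp (-v ^ 2)) =
    ENNReal.ofReal (√π / 2) := by
  have h := integral_gaussian_Ioi 1
  have hi := (integrable_exp_neg_mul_sq (b := 1) one_pos).restrict (s := Set.Ioi 0)
  rw [← ofReal_integral_eq_lintegral_ofReal]
  · simp at h; rw [h]
  · simpa using hi
  · exact Filter.Eventually.of_forall fun x => (Real.exp_pos _).le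

lemma aux_sub_pos (β : ℝ) (hβ : 0 < β) :
    ∫⁻ v in Set.Ioi (0:ℝ), ENNReal.ofReal (Real.exp (-(v - β / v) ^ 2)) =
    ENNReal.ofReal (√π / 2) := by
  have h1 := lintegral_image_eq_lintegral_abs_deriv_mul (s := Set.Ioi (0:ℝ))
    (f := fun v => v - β / v) (f' := fun v => 1 + β / v ^ 2) measurableSet_Ioi
    (by
      intro x hx
      have hx' : x ≠ 0 := ne_of_gt hx
      have := ((hasDerivAt_id x).sub ((hasDerivAt_inv hx').const_mul β))
      refine HasDerivAt.hasDerivWithinAt ?_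
      convert! this using 1
      field_simp
      ring)
    (by
      intro x hx y hy hxy
      have hx' : 0 < x := hx
      have hy' : 0 < y := hy
      have hxy' : x - β / x = y - β / y := hxy
      field_simp at hxy'
      have : (x - y) * (x * y + β) = 0 := by linear_combination hxy'
      rcases mul_eq_zero.1 this with h | h
      · linarith
      · have : 0 < x * y := mul_pos hx' hy'
        linarith)
    (fun u => ENNReal.ofReal (Real.exp (-u ^ 2)))
  have himg : (fun v => v - β / v) '' Set.Ioi (0:ℝ) = Set.univ := by
    refine Set.eq_univ_of_forall fun u => ?_
    have hs : |u| < √(u ^ 2 + 4 * β) := by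
      rw [← Real.sqrt_sq_eq_abs]; exact Real.sqrt_lt_sqrt (sq_nonneg _) (by linarith)
    have hpos : 0 < (u + √(u ^ 2 + 4 * β)) / 2 := by
      have := neg_abs_le u; linarith
    refine ⟨(u + √(u ^ 2 + 4 * β)) / 2, hpos, ?_⟩
    have hsq := Real.sq_sqrt (show 0 ≤ u ^ 2 + 4 * β by positivity)
    set r := √(u ^ 2 + 4 * β)
    have hne : u + r ≠ 0 := by intro h; rw [h] at hpos; simp at hpos
    simp only
    field_simp
    nlinarith
  rw [himg, Measure.restrict_univ, aux_gauss_lint] at h1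
  have h2 := lintegral_image_eq_lintegral_abs_deriv_mul (s := Set.Ioi (0:ℝ))
    (f := fun v => β / v) (f' := fun v => - (β / v ^ 2)) measurableSet_Ioi
    (by
      intro x hx
      have hx' : x ≠ 0 := ne_of_gt hx
      have := ((hasDerivAt_inv hx').const_mul β)
      refine HasDerivAt.hasDerivWithinAt ?_
      convert! this using 1
      field_simp)
    (by
      intro x hx y hy hxy
      have hx' : 0 < x := hx
      have hy' : 0 < y := hy
      have hxy' : β / x = β / y := hxy
      field_simp at hxy'
      exact hxy'.symm)
    (fun v => ENNReal.ofReal (Real.exp (-(v - β / v) ^ 2)))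
  have himg2 : (fun v => β / v) '' Set.Ioi (0:ℝ) = Set.Ioi 0 := by
    ext u
    constructor
    · rintro ⟨v, hv, rfl⟩
      have : 0 < v := hv
      exact div_pos hβ this
    · intro hu
      have : 0 < u := hu
      exact ⟨β / u, div_pos hβ this, by simp only; field_simp⟩
  rw [himg2] at h2
  set I := ∫⁻ v in Set.Ioi (0:ℝ), ENNReal.ofReal (Real.exp (-(v - β / v) ^ 2)) with hI
  have h3 : ENNReal.ofReal √π = I + I := by
    rw [h1]
    nth_rewrite 2 [h2]
    rw [hI, ← lintegral_add_left (by fun_prop)]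
    refine setLIntegral_congr_fun measurableSet_Ioi fun v hv => ?_
    have hv' : 0 < v := hv
    have e1 : β / v - β / (β / v) = - (v - β / v) := by field_simp; ring
    rw [e1, neg_sq, abs_neg, abs_of_pos (by positivity), abs_of_pos (by positivity),
      ENNReal.ofReal_add zero_le_one (by positivity), add_mul]
    simp
  have h4 : (2:ℝ≥0∞) * I = ENNReal.ofReal √π := by rw [h3, two_mul]
  rw [ENNReal.ofReal_div_of_pos two_pos, ← h4]
  rw [ENNReal.ofReal_ofNat, mul_comm]
  exact (ENNReal.mul_div_cancel_right two_ne_zero ENNReal.ofNat_ne_top).symm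

lemma aux_sub (c : ℝ) (hc : 0 ≤ c) :
    ∫⁻ v in Set.Ioi (0:ℝ), ENNReal.ofReal (2 / √π * Real.exp (-v ^ 2)) *
      ENNReal.ofReal (Real.exp (-(c ^ 2 / (4 * v ^ 2)))) = ENNReal.ofReal (Real.exp (-c)) := by
  have hpi : 0 < √π := Real.sqrt_pos.2 Real.pi_pos
  have key : ∫⁻ v in Set.Ioi (0:ℝ), ENNReal.ofReal (Real.exp (-(v - (c/2) / v) ^ 2)) =
    ENNReal.ofReal (√π / 2) := by
    rcases hc.eq_or_lt with rfl | hc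
    · simpa using aux_sub_zero
    · exact aux_sub_pos _ (by positivity)
  calc _ = ∫⁻ v in Set.Ioi (0:ℝ), ENNReal.ofReal (2 / √π * Real.exp (-c)) *
      ENNReal.ofReal (Real.exp (-(v - (c/2) / v) ^ 2)) := by
        refine setLIntegral_congr_fun measurableSet_Ioi fun v hv => ?_
        have hv' : 0 < v := hv
        rw [← ENNReal.ofReal_mul (by positivity), ← ENNReal.ofReal_mul (by positivity),
          mul_assoc, mul_assoc, ← Real.exp_add, ← Real.exp_add]
        congr 3
        field_simp
        ring
    _ = _ := by
        rw [lintegral_const_mul _ (by fun_prop), key, ← ENNReal.ofReal_mul (by positivity)]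
        congr 1
        field_simp


/-- the mixing measure in `(t,v)` -/
noncomputable def auxNu (γ : ℝ) : Measure (ℝ × ℝ) :=
  ((volume.restrict (Set.Ioi (0:ℝ))).withDensity
    (fun t => ENNReal.ofReal (t ^ (γ / 2 - 1) / Real.Gamma (γ / 2)))).prod
  ((volume.restrict (Set.Ioi (0:ℝ))).withDensity
    (fun v => ENNReal.ofReal (2 / √π * Real.exp (-v ^ 2))))

/-- the mixing measure in the Gaussian parameter -/
noncomputable def auxMu (γ a : ℝ) : Measure ℝ :=
  (auxNu γ).map (fun q => q.1 + a ^ 2 / (4 * q.2 ^ 2))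

instance auxMu_sfinite (γ a : ℝ) : SFinite (auxMu γ a) := by
  unfold auxMu auxNu; infer_instance

lemma auxNu_lint (γ : ℝ) (F G : ℝ → ℝ≥0∞) (hF : Measurable F) (hG : Measurable G) :
    ∫⁻ q, F q.1 * G q.2 ∂(auxNu γ) =
      (∫⁻ t in Set.Ioi (0:ℝ), ENNReal.ofReal (t ^ (γ / 2 - 1) / Real.Gamma (γ / 2)) * F t) *
      (∫⁻ v in Set.Ioi (0:ℝ), ENNReal.ofReal (2 / √π * Real.exp (-v ^ 2)) * G v) := by
  unfold auxNu
  rw [lintegral_prod_mul hF.aemeasurable hG.aemeasurable,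
    lintegral_withDensity_eq_lintegral_mul _ (by fun_prop) hF,
    lintegral_withDensity_eq_lintegral_mul _ (by fun_prop) hG]
  rfl

lemma auxNu_ae (γ : ℝ) : ∀ᵐ q ∂(auxNu γ), 0 < q.1 := by
  unfold auxNu
  have h : ∀ᵐ t ∂((volume.restrict (Set.Ioi (0:ℝ))).withDensity
    (fun t => ENNReal.ofReal (t ^ (γ / 2 - 1) / Real.Gamma (γ / 2)))), 0 < t :=
    (withDensity_absolutelyContinuous _ _).ae_le
      ((ae_restrict_iff' measurableSet_Ioi).2 (Filter.Eventually.of_forall fun x hx => hx))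
  exact Measure.quasiMeasurePreserving_fst.ae h

lemma auxMu_ae (γ a : ℝ) : ∀ᵐ s ∂(auxMu γ a), 0 < s := by
  unfold auxMu
  rw [ae_map_iff (by fun_prop) measurableSet_Ioi]
  filter_upwards [auxNu_ae γ] with q hq
  positivity

lemma auxMu_exp (γ a r : ℝ) (hγ : 0 < γ) (ha : 0 ≤ a) (hr : 0 < r) :
    ∫⁻ s, ENNReal.ofReal (Real.exp (-(s * r ^ 2))) ∂(auxMu γ a) =
      ENNReal.ofReal (Real.exp (-(a * r)) * r ^ (-γ)) := by
  unfold auxMu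
  rw [lintegral_map (by fun_prop) (by fun_prop)]
  have : ∀ q : ℝ × ℝ, ENNReal.ofReal (Real.exp (-((q.1 + a ^ 2 / (4 * q.2 ^ 2)) * r ^ 2))) =
      (fun t => ENNReal.ofReal (Real.exp (-(r ^ 2 * t)))) q.1 *
      (fun v => ENNReal.ofReal (Real.exp (-((a * r) ^ 2 / (4 * v ^ 2))))) q.2 := by
    intro q
    simp only
    rw [← ENNReal.ofReal_mul (Real.exp_pos _).le, ← Real.exp_add]
    congr 2
    ring
  rw [lintegral_congr this, auxNu_lint γ (fun t => ENNReal.ofReal (Real.exp (-(r ^ 2 * t))))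
    (fun v => ENNReal.ofReal (Real.exp (-((a * r) ^ 2 / (4 * v ^ 2))))) (by fun_prop) (by fun_prop),
    aux_sub _ (by positivity)]
  have hG : 0 < Real.Gamma (γ / 2) := Real.Gamma_pos_of_pos (by positivity)
  have h1 : ∫⁻ t in Set.Ioi (0:ℝ), ENNReal.ofReal (t ^ (γ / 2 - 1) / Real.Gamma (γ / 2)) *
      ENNReal.ofReal (Real.exp (-(r ^ 2 * t))) = ENNReal.ofReal (r ^ (-γ)) := by
    have h := Real.integral_rpow_mul_exp_neg_mul_Ioi (a := γ / 2) (r := r ^ 2)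
      (by positivity) (by positivity)
    have hi : IntegrableOn (fun t : ℝ => t ^ (γ / 2 - 1) * Real.exp (-(r ^ 2 * t)))
        (Set.Ioi 0) := by
      by_contra hni
      rw [integral_undef hni] at h
      have : 0 < (1 / r ^ 2) ^ (γ / 2) * Real.Gamma (γ / 2) := by positivity
      linarith
    calc _ = ∫⁻ t in Set.Ioi (0:ℝ), ENNReal.ofReal (Real.Gamma (γ / 2))⁻¹ *
        ENNReal.ofReal (t ^ (γ / 2 - 1) * Real.exp (-(r ^ 2 * t))) := by
          refine setLIntegral_congr_fun measurableSet_Ioi fun t ht => ?_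
          have ht' : 0 < t := ht
          rw [← ENNReal.ofReal_mul (by positivity), ← ENNReal.ofReal_mul (by positivity)]
          congr 1
          ring
      _ = _ := by
        rw [lintegral_const_mul _ (by fun_prop), ← ofReal_integral_eq_lintegral_ofReal hi, h,
          ← ENNReal.ofReal_mul (by positivity)]
        · congr 1
          rw [one_div, Real.inv_rpow (by positivity), ← Real.rpow_natCast, ← Real.rpow_mul hr.le,
            Real.rpow_neg hr.le]
          push_cast
          rw [show (2 * (γ / 2)) = γ by ring]
          field_simp
        · filter_upwards [ae_restrict_mem measurableSet_Ioi] with t ht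
          have ht' : 0 < t := ht
          simp only [Pi.zero_apply]
          positivity
  rw [h1, ← ENNReal.ofReal_mul (by positivity), mul_comm]

lemma aux_exp_bound (k x : ℝ) (hk : 0 < k) (hx : 0 < x) : x ^ k * Real.exp (-x) ≤ k ^ k := by
  have h1 : x / k ≤ Real.exp (x / k) := by have := Real.add_one_le_exp (x / k); linarith
  have h2 : (x / k) ^ k ≤ Real.exp x := by
    calc (x / k) ^ k ≤ (Real.exp (x / k)) ^ k := Real.rpow_le_rpow (by positivity) h1 hk.le
      _ = Real.exp x := by rw [← Real.exp_mul]; congr 1; field_simp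
  rw [Real.div_rpow hx.le hk.le, div_le_iff₀ (by positivity)] at h2
  rw [Real.exp_neg]
  rw [← div_eq_mul_inv, div_le_iff₀ (by positivity)]
  linarith

lemma aux_gauss_pt (k s r : ℝ) (hk : 0 < k) (hs : 0 < s) (hr : 0 < r) :
    (π / s) ^ k * Real.exp (-(π ^ 2 * r ^ 2 / s)) ≤ (k / π) ^ k * r ^ (-(2 * k)) := by
  have hpi := Real.pi_pos
  have h := aux_exp_bound k (π ^ 2 * r ^ 2 / s) hk (by positivity)
  have e : (π / s) ^ k = (π ^ 2 * r ^ 2 / s) ^ k * ((π)⁻¹ ^ k * r ^ (-(2 * k))) := by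
    have : r ^ (-(2 * k)) = ((r ^ 2)⁻¹) ^ k := by
      rw [Real.inv_rpow (by positivity), ← Real.rpow_natCast, ← Real.rpow_mul hr.le,
        Real.rpow_neg hr.le]
      push_cast; rfl
    rw [this, ← Real.mul_rpow (by positivity) (by positivity),
      ← Real.mul_rpow (by positivity) (by positivity)]
    congr 1
    field_simp
  rw [e, div_eq_mul_inv k π, Real.mul_rpow hk.le (by positivity)]
  calc _ = ((π ^ 2 * r ^ 2 / s) ^ k * Real.exp (-(π ^ 2 * r ^ 2 / s))) *
        ((π)⁻¹ ^ k * r ^ (-(2 * k))) := by ring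
    _ ≤ k ^ k * ((π)⁻¹ ^ k * r ^ (-(2 * k))) := by gcongr
    _ = _ := by ring

lemma auxMu_gauss (γ k : ℝ) (hγ : 0 < γ) (hk : γ < 2 * k) :
    ∃ C : ℝ, 0 < C ∧ ∀ a r : ℝ, 0 ≤ a → 0 < r →
    ∫⁻ s, ENNReal.ofReal ((π / s) ^ k * Real.exp (-(π ^ 2 * r ^ 2 / s))) ∂(auxMu γ a) ≤
      ENNReal.ofReal (C * r ^ (γ - 2 * k)) := by
  have hpi := Real.pi_pos
  have hk0 : 0 < k := by linarith
  have hG : 0 < Real.Gamma (γ / 2) := Real.Gamma_pos_of_pos (by positivity)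
  have hk2 : 0 < k - γ / 2 := by linarith
  refine ⟨(Real.Gamma (γ / 2))⁻¹ * ((k / π) ^ k * (γ / 2)⁻¹ + π ^ k * (k - γ / 2)⁻¹),
    by positivity, fun a r ha hr => ?_⟩
  have hν : ∀ M : ℝ → ℝ≥0∞, Measurable M → ∫⁻ q, M q.1 ∂(auxNu γ) =
      ∫⁻ t in Set.Ioi (0:ℝ), ENNReal.ofReal (t ^ (γ / 2 - 1) / Real.Gamma (γ / 2)) * M t := by
    intro M hM
    have := auxNu_lint γ M (fun _ => 1) hM measurable_const
    have h0 := aux_sub 0 le_rfl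
    simp only [mul_one] at this
    simp at h0
    rw [this, h0, mul_one]
  unfold auxMu
  rw [lintegral_map (by fun_prop) (by fun_prop)]
  let M : ℝ → ℝ≥0∞ := fun t => if t ≤ r ^ 2 then ENNReal.ofReal ((k / π) ^ k * r ^ (-(2 * k)))
    else ENNReal.ofReal (π ^ k * t ^ (-k))
  have hM : Measurable M := by
    refine Measurable.ite measurableSet_Iic measurable_const (by fun_prop)
  calc _ ≤ ∫⁻ q, M q.1 ∂(auxNu γ) := by
        refine lintegral_mono_ae ?_
        filter_upwards [auxNu_ae γ] with q hq
        have hs : 0 < q.1 + a ^ 2 / (4 * q.2 ^ 2) := by positivity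
        simp only [M]
        split_ifs with h
        · exact ENNReal.ofReal_le_ofReal (aux_gauss_pt k _ r hk0 hs hr)
        · refine ENNReal.ofReal_le_ofReal ?_
          have h1 : Real.exp (-(π ^ 2 * r ^ 2 / (q.1 + a ^ 2 / (4 * q.2 ^ 2)))) ≤ 1 := by
            rw [Real.exp_le_one_iff]
            have : 0 ≤ (π ^ 2 * r ^ 2 / (q.1 + a ^ 2 / (4 * q.2 ^ 2))) := by positivity
            linarith
          have h2 : (π / (q.1 + a ^ 2 / (4 * q.2 ^ 2))) ^ k ≤ (π / q.1) ^ k := by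
            refine Real.rpow_le_rpow (by positivity) ?_ hk0.le
            gcongr
            have : 0 ≤ a ^ 2 / (4 * q.2 ^ 2) := by positivity
            linarith
          have h3 : (π / q.1) ^ k = π ^ k * q.1 ^ (-k) := by
            rw [Real.div_rpow hpi.le hq.le, Real.rpow_neg hq.le]; rfl
          rw [← h3]
          calc _ ≤ (π / q.1) ^ k * 1 := by gcongr
            _ = _ := mul_one _
    _ = _ := hν M hM
    _ = (∫⁻ t in Set.Ioc 0 (r ^ 2), ENNReal.ofReal (t ^ (γ / 2 - 1) / Real.Gamma (γ / 2)) * M t) +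
        ∫⁻ t in Set.Ioi (r ^ 2), ENNReal.ofReal (t ^ (γ / 2 - 1) / Real.Gamma (γ / 2)) * M t := by
        rw [← lintegral_union measurableSet_Ioi (Set.Ioc_disjoint_Ioi le_rfl),
          Set.Ioc_union_Ioi_eq_Ioi (by positivity)]
    _ = (∫⁻ t in Set.Ioc 0 (r ^ 2), ENNReal.ofReal
            ((Real.Gamma (γ / 2))⁻¹ * ((k / π) ^ k * r ^ (-(2 * k))) * t ^ (γ / 2 - 1))) +
        ∫⁻ t in Set.Ioi (r ^ 2), ENNReal.ofReal
            ((Real.Gamma (γ / 2))⁻¹ * π ^ k * t ^ (γ / 2 - 1 - k)) := by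
        congr 1
        · refine setLIntegral_congr_fun measurableSet_Ioc fun t ht => ?_
          have ht0 : 0 < t := ht.1
          simp only [M, if_pos ht.2]
          rw [← ENNReal.ofReal_mul (by positivity)]
          congr 1; ring
        · refine setLIntegral_congr_fun measurableSet_Ioi fun t ht => ?_
          have ht1 : r ^ 2 < t := ht
          have ht0 : 0 < t := lt_trans (by positivity) ht1
          simp only [M, if_neg ht1.not_ge]
          rw [← ENNReal.ofReal_mul (by positivity), sub_eq_add_neg (γ / 2 - 1) k,
            Real.rpow_add ht0]
          congr 1; ring
    _ = ENNReal.ofReal ((Real.Gamma (γ / 2))⁻¹ * ((k / π) ^ k * r ^ (-(2 * k))) *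
          ((r ^ 2) ^ (γ / 2) / (γ / 2))) +
        ENNReal.ofReal ((Real.Gamma (γ / 2))⁻¹ * π ^ k * ((r ^ 2) ^ (γ / 2 - k) / (k - γ / 2))) := by
        congr 1
        · have hi : IntegrableOn (fun t : ℝ => t ^ (γ / 2 - 1)) (Set.Ioc 0 (r ^ 2)) := by
            rw [← intervalIntegrable_iff_integrableOn_Ioc_of_le (by positivity)]
            exact intervalIntegral.intervalIntegrable_rpow' (by linarith)
          rw [← ofReal_integral_eq_lintegral_ofReal (hi.const_mul _), integral_const_mul,
            ← intervalIntegral.integral_of_le (by positivity), integral_rpow (Or.inl (by linarith))]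
          · rw [sub_add_cancel, Real.zero_rpow (by positivity), sub_zero]
          · filter_upwards [ae_restrict_mem measurableSet_Ioc] with t ht
            have ht' : 0 < t := ht.1
            simp only [Pi.zero_apply]
            positivity
        · have hi : IntegrableOn (fun t : ℝ => t ^ (γ / 2 - 1 - k)) (Set.Ioi (r ^ 2)) :=
            integrableOn_Ioi_rpow_of_lt (by linarith) (by positivity)
          rw [← ofReal_integral_eq_lintegral_ofReal (hi.const_mul _), integral_const_mul,
            integral_Ioi_rpow_of_lt (by linarith) (by positivity)]
          · rw [show γ / 2 - 1 - k + 1 = -(k - γ / 2) by ring, div_neg, neg_div, neg_neg,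
              show γ / 2 - k = -(k - γ / 2) by ring]
          · filter_upwards [ae_restrict_mem measurableSet_Ioi] with t ht
            have ht1 : r ^ 2 < t := ht
            have ht' : 0 < t := lt_trans (by positivity) ht1
            simp only [Pi.zero_apply]
            positivity
    _ = _ := by
        rw [← ENNReal.ofReal_add (by positivity) (by positivity)]
        congr 1
        have e1 : (r ^ 2) ^ (γ / 2) = r ^ γ := by
          rw [← Real.rpow_natCast, ← Real.rpow_mul hr.le]; congr 1; push_cast; ring
        have e2 : (r ^ 2) ^ (γ / 2 - k) = r ^ (γ - 2 * k) := by
          rw [← Real.rpow_natCast, ← Real.rpow_mul hr.le]; congr 1; push_cast; ring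
        have e3 : r ^ (γ - 2 * k) = r ^ γ * r ^ (-(2 * k)) := by
          rw [sub_eq_add_neg, Real.rpow_add hr]
        rw [e1, e2, e3]
        ring
    _ ≤ _ := le_rfl


lemma aux_gauss_fourier (d : ℕ) (s : ℝ) (hs : 0 < s)
    (h : SchwartzMap (EuclideanSpace ℝ (Fin d)) ℂ) (z ξ : EuclideanSpace ℝ (Fin d)) :
    ‖∫ x, 𝐞 (-inner ℝ x ξ) • (h x * ((Real.exp (-(s * ‖x - z‖ ^ 2)) : ℝ) : ℂ))‖ₑ ≤
      ∫⁻ η, ENNReal.ofReal ((π / s) ^ ((d:ℝ) / 2) * Real.exp (-(π ^ 2 * ‖ξ - η‖ ^ 2 / s))) *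
        ‖𝓕 (⇑h) η‖ₑ := by
  have hre : 0 < ((s:ℂ)).re := by simpa using hs
  let g : EuclideanSpace ℝ (Fin d) → ℂ :=
    fun x => Complex.exp (-(s:ℂ) * ‖x‖ ^ 2 + 2 * π * Complex.I * ((inner ℝ ξ x : ℝ) : ℂ))
  have hgn : ∀ x, ‖g x‖ = Real.exp (-(s * ‖x‖ ^ 2)) := by
    intro x
    simp only [g, Complex.norm_exp]
    congr 1
    simp [← Complex.ofReal_pow]
  have hgi : Integrable g := by
    have := GaussianFourier.integrable_cexp_neg_mul_sq_norm_add (V := EuclideanSpace ℝ (Fin d)) hre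
      (2 * π * Complex.I) ξ
    exact this
  have hF : ∀ w, ‖𝓕 g w‖ = (π / s) ^ ((d:ℝ) / 2) * Real.exp (-(π ^ 2 * ‖ξ - w‖ ^ 2 / s)) := by
    intro w
    have := fourier_gaussian_innerProductSpace' (V := EuclideanSpace ℝ (Fin d)) hre ξ w
    simp only [g]
    rw [this, norm_mul, Complex.norm_exp]
    congr 1
    · rw [← Complex.ofReal_div, Complex.norm_cpow_eq_rpow_re_of_pos (by positivity)]
      simp
    · congr 1
      rw [show (-(π:ℂ) ^ 2 * (‖ξ - w‖:ℂ) ^ 2 / s) = ((-(π ^ 2 * ‖ξ - w‖ ^ 2 / s) : ℝ) : ℂ) by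
        push_cast; ring, Complex.ofReal_re]
  have hFt : ∀ w, ‖𝓕 (g ∘ fun v => v + z) w‖ = ‖𝓕 g w‖ := by
    intro w
    have := congrFun (VectorFourier.fourierIntegral_comp_add_right 𝐞
      (volume : Measure (EuclideanSpace ℝ (Fin d))) (innerₗ _) g z) w
    have e : 𝓕 (g ∘ fun v => v + z) w = 𝐞 (inner ℝ z w) • 𝓕 g w := this
    rw [e, Circle.norm_smul]
  let H : SchwartzMap (EuclideanSpace ℝ (Fin d)) ℂ := 𝓕 h
  have hadj : ∫ x, 𝓕 (⇑H) x • (g ∘ fun v => v + z) x =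
      ∫ η, H η • 𝓕 (g ∘ fun v => v + z) η := by
    simpa using! VectorFourier.integral_fourierIntegral_smul_eq_flip
      (L := innerₗ (EuclideanSpace ℝ (Fin d)))
      Real.continuous_fourierChar continuous_inner H.integrable (hgi.comp_add_right z)
  have hinv : ∀ x, 𝓕 (⇑H) x = h (-x) := by
    intro x
    have h1 : 𝓕⁻ (⇑H) (-x) = 𝓕 (⇑H) x := by
      rw [fourierInv_eq_fourier_neg, neg_neg]
    rw [← h1, ← SchwartzMap.fourierInv_coe]
    simp only [H, FourierTransform.fourierInv_fourier_eq]
  have hstart : ∫ x, 𝐞 (-inner ℝ x ξ) • (h x * ((Real.exp (-(s * ‖x - z‖ ^ 2)) : ℝ) : ℂ)) =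
      𝐞 (-inner ℝ z ξ) • ∫ x, 𝓕 (⇑H) x • (g ∘ fun v => v + z) x := by
    rw [← integral_neg_eq_self, Circle.smul_def, smul_eq_mul, ← integral_const_mul]
    congr 1
    ext x
    rw [hinv]
    simp only [Function.comp, g, inner_neg_left, neg_neg, smul_eq_mul, Circle.smul_def,
      Real.fourierChar_apply]
    have e1 : ‖-x - z‖ = ‖x + z‖ := by rw [← norm_neg]; congr 1; abel
    rw [e1, inner_add_right, real_inner_comm x ξ, real_inner_comm z ξ, Complex.ofReal_exp]
    rw [mul_left_comm, ← Complex.exp_add, mul_left_comm, ← Complex.exp_add]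
    congr 2
    push_cast
    ring
  have hc : ∀ (c : Circle) (w : ℂ), ‖c • w‖ₑ = ‖w‖ₑ := by
    intro c w
    rw [← ofReal_norm, Circle.norm_smul, ofReal_norm]
  rw [hstart, hadj, hc]
  refine (enorm_integral_le_lintegral_enorm _).trans (le_of_eq ?_)
  refine lintegral_congr fun η => ?_
  rw [smul_eq_mul, enorm_mul, mul_comm, ← hF, ← hFt, ofReal_norm]
  rfl


lemma aux_ball (d : ℕ) (hd : 1 ≤ d) (β : ℝ) (hβ : β < d) :
    ∫⁻ x in Metric.ball (0 : EuclideanSpace ℝ (Fin d)) 1, ENNReal.ofReal (‖x‖ ^ (-β)) < ∞ := by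
  have : Nonempty (Fin d) := ⟨⟨0, hd⟩⟩
  have h : IntegrableOn (fun x : EuclideanSpace ℝ (Fin d) => (fun r : ℝ => r ^ (-β)) ‖x‖)
      (Metric.ball 0 1) := by
    refine (integrableOn_fun_norm_addHaar volume (f := fun r : ℝ => r ^ (-β))).2 ?_
    have h2 : IntegrableOn (fun y : ℝ => y ^ ((d:ℝ) - 1 - β)) (Set.Ioo 0 1) := by
      rw [← intervalIntegrable_iff_integrableOn_Ioo_of_le zero_le_one]
      exact intervalIntegral.intervalIntegrable_rpow' (by linarith)
    refine h2.congr_fun (fun y hy => ?_) measurableSet_Ioo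
    have hy0 : 0 < y := hy.1
    simp only [finrank_euclideanSpace, Fintype.card_fin, smul_eq_mul]
    rw [sub_eq_add_neg _ β, Real.rpow_add hy0, ← Real.rpow_natCast, Nat.cast_sub hd, Nat.cast_one]
  exact h.lintegral_lt_top

lemma aux_kernel_bdd (d : ℕ) (hd : 1 ≤ d) (γ : ℝ) (hγ0 : 0 < γ) (hγ : γ < d)
    (h : SchwartzMap (EuclideanSpace ℝ (Fin d)) ℂ) :
    ∃ M : ℝ≥0∞, M < ∞ ∧ ∀ z, ∫⁻ x, ‖h x‖ₑ * ENNReal.ofReal (‖x - z‖ ^ (-γ)) ≤ M := by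
  obtain ⟨B, hB⟩ : ∃ B : ℝ, ∀ x, ‖h x‖ ≤ B := by
    refine ⟨SchwartzMap.seminorm ℝ 0 0 h, fun x => ?_⟩
    simpa using SchwartzMap.le_seminorm ℝ 0 0 h x
  refine ⟨(∫⁻ x, ‖h x‖ₑ) + ENNReal.ofReal B * ∫⁻ x in Metric.ball (0 : EuclideanSpace ℝ (Fin d)) 1,
    ENNReal.ofReal (‖x‖ ^ (-γ)), ?_, fun z => ?_⟩
  · refine ENNReal.add_lt_top.2 ⟨h.integrable.2, ENNReal.mul_lt_top ENNReal.ofReal_lt_top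
      (aux_ball d hd γ hγ)⟩
  · have hcont : Continuous h := h.continuous
    rw [← lintegral_indicator measurableSet_ball]
    rw [← lintegral_sub_right_eq_self ((Metric.ball (0 : EuclideanSpace ℝ (Fin d)) 1).indicator _) z]
    rw [← lintegral_const_mul _ ?_, ← lintegral_add_left (by fun_prop)]
    · refine lintegral_mono fun x => ?_
      by_cases hx : x - z ∈ Metric.ball (0 : EuclideanSpace ℝ (Fin d)) 1
      · rw [Set.indicator_of_mem hx]
        refine le_add_left ?_
        gcongr
        rw [← ofReal_norm]
        exact ENNReal.ofReal_le_ofReal (hB x)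
      · refine le_add_right ?_
        have h1 : 1 ≤ ‖x - z‖ := by simpa using hx
        have h2 : ‖x - z‖ ^ (-γ) ≤ 1 := Real.rpow_le_one_of_one_le_of_nonpos h1 (by linarith)
        calc _ ≤ ‖h x‖ₑ * 1 := by
              gcongr
              exact ENNReal.ofReal_le_one.2 h2
          _ = _ := mul_one _
    · exact (Measurable.indicator (by fun_prop) measurableSet_ball).comp (by fun_prop)

lemma aux_enorm_circle (c : Circle) (w : ℂ) : ‖c • w‖ₑ = ‖w‖ₑ := by
  rw [← ofReal_norm, Circle.norm_smul, ofReal_norm]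

lemma aux_kernel_le (a γ r : ℝ) (ha : 0 ≤ a) (hr : 0 ≤ r) :
    Real.exp (-(a * r)) * r ^ (-γ) ≤ r ^ (-γ) := by
  have h1 : Real.exp (-(a * r)) ≤ 1 := by
    rw [Real.exp_le_one_iff]; have := mul_nonneg ha hr; linarith
  exact mul_le_of_le_one_left (by positivity) h1

lemma aux_inner (d : ℕ) (hd : 1 ≤ d) (γ : ℝ) (hγ0 : 0 < γ) (hγ : γ < d) :
    ∃ C : ℝ, 0 < C ∧ ∀ a : ℝ, 0 ≤ a → ∀ h : SchwartzMap (EuclideanSpace ℝ (Fin d)) ℂ,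
    ∀ z ξ : EuclideanSpace ℝ (Fin d),
    ‖∫ x, 𝐞 (-inner ℝ x ξ) • (h x *
        ((Real.exp (-(a * ‖x - z‖)) * ‖x - z‖ ^ (-γ) : ℝ) : ℂ))‖ₑ ≤
      ∫⁻ η, ENNReal.ofReal (C * ‖ξ - η‖ ^ (γ - d)) * ‖𝓕 (⇑h) η‖ₑ := by
  have : Nonempty (Fin d) := ⟨⟨0, hd⟩⟩
  obtain ⟨C, hC, hCb⟩ := auxMu_gauss γ ((d:ℝ) / 2) hγ0 (by linarith)
  refine ⟨C, hC, fun a ha h z ξ => ?_⟩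
  have hcont : Continuous h := h.continuous
  have hFcont : Continuous (𝓕 (⇑h)) := (𝓕 h : SchwartzMap (EuclideanSpace ℝ (Fin d)) ℂ).continuous
  obtain ⟨M, hM, hMb⟩ := aux_kernel_bdd d hd γ hγ0 hγ h
  have hne : ∀ z : EuclideanSpace ℝ (Fin d), ∀ᵐ x, x ≠ z := fun z => by
    rw [ae_iff]; simp
  let F : EuclideanSpace ℝ (Fin d) → ℝ → ℂ := fun x s =>
    𝐞 (-inner ℝ x ξ) • (h x * ((Real.exp (-(s * ‖x - z‖ ^ 2)) : ℝ) : ℂ))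
  have hFc : Continuous (Function.uncurry F) := by
    have : Continuous (fun q : EuclideanSpace ℝ (Fin d) × ℝ => 𝐞 (-inner ℝ q.1 ξ)) :=
      Real.continuous_fourierChar.comp (by fun_prop)
    exact this.smul (by fun_prop)
  have hFn : ∀ x s, ‖F x s‖ₑ = ‖h x‖ₑ * ENNReal.ofReal (Real.exp (-(s * ‖x - z‖ ^ 2))) := by
    intro x s
    simp only [F]
    rw [aux_enorm_circle, enorm_mul, ← ofReal_norm (Complex.ofReal _), Complex.norm_real,
      Real.norm_of_nonneg (Real.exp_pos _).le]
  have hFi : Integrable (Function.uncurry F) (volume.prod (auxMu γ a)) := by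
    refine ⟨hFc.aestronglyMeasurable, ?_⟩
    rw [HasFiniteIntegral, lintegral_prod _ hFc.measurable.enorm.aemeasurable]
    refine lt_of_le_of_lt ?_ hM
    refine le_trans (lintegral_mono_ae ?_) (hMb z)
    filter_upwards [hne z] with x hx
    have hr : 0 < ‖x - z‖ := norm_pos_iff.2 (sub_ne_zero.2 hx)
    simp only [Function.uncurry]
    simp_rw [hFn]
    rw [lintegral_const_mul _ (by fun_prop), auxMu_exp γ a _ hγ0 ha hr]
    gcongr
    exact aux_kernel_le _ _ _ ha hr.le
  have hstart : ∫ x, 𝐞 (-inner ℝ x ξ) • (h x *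
        ((Real.exp (-(a * ‖x - z‖)) * ‖x - z‖ ^ (-γ) : ℝ) : ℂ)) =
      ∫ x, ∫ s, F x s ∂(auxMu γ a) := by
    refine integral_congr_ae ?_
    filter_upwards [hne z] with x hx
    have hr : 0 < ‖x - z‖ := norm_pos_iff.2 (sub_ne_zero.2 hx)
    have e := auxMu_exp γ a _ hγ0 ha hr
    have e2 : ∫ s, Real.exp (-(s * ‖x - z‖ ^ 2)) ∂(auxMu γ a) =
        Real.exp (-(a * ‖x - z‖)) * ‖x - z‖ ^ (-γ) := by
      rw [integral_eq_lintegral_of_nonneg_ae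
        (Filter.Eventually.of_forall fun s => (Real.exp_pos _).le) (by fun_prop), e,
        ENNReal.toReal_ofReal (by positivity)]
    simp only [F, Circle.smul_def, smul_eq_mul]
    rw [integral_const_mul, integral_const_mul, integral_complex_ofReal, e2]
  rw [hstart, integral_integral_swap hFi]
  calc _ ≤ ∫⁻ s, ‖∫ x, F x s‖ₑ ∂(auxMu γ a) := enorm_integral_le_lintegral_enorm _
    _ ≤ ∫⁻ s, (∫⁻ η, ENNReal.ofReal ((π / s) ^ ((d:ℝ) / 2) *
          Real.exp (-(π ^ 2 * ‖ξ - η‖ ^ 2 / s))) * ‖𝓕 (⇑h) η‖ₑ) ∂(auxMu γ a) := by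
        refine lintegral_mono_ae ?_
        filter_upwards [auxMu_ae γ a] with s hs
        exact aux_gauss_fourier d s hs h z ξ
    _ = ∫⁻ η, ∫⁻ s, ENNReal.ofReal ((π / s) ^ ((d:ℝ) / 2) *
          Real.exp (-(π ^ 2 * ‖ξ - η‖ ^ 2 / s))) * ‖𝓕 (⇑h) η‖ₑ ∂(auxMu γ a) := by
        rw [lintegral_lintegral_swap]
        have : Measurable (𝓕 (⇑h)) := hFcont.measurable
        have h2 : Measurable (fun q : ℝ × EuclideanSpace ℝ (Fin d) => ‖𝓕 (⇑h) q.2‖ₑ) :=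
          (this.comp measurable_snd).enorm
        refine Measurable.aemeasurable ?_
        refine Measurable.mul ?_ h2
        fun_prop
    _ ≤ _ := by
        refine lintegral_mono_ae ?_
        filter_upwards [hne ξ] with η hη
        have hr : 0 < ‖ξ - η‖ := norm_pos_iff.2 (sub_ne_zero.2 hη.symm)
        rw [lintegral_mul_const _ (by fun_prop)]
        gcongr
        refine (hCb a _ ha hr).trans (le_of_eq ?_)
        rw [show 2 * ((d:ℝ) / 2) = d by ring]

lemma aux_pointwise (d : ℕ) (hd : 1 ≤ d) (γ : ℝ) (hγ0 : 0 < γ) (hγ : γ < d) :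
    ∃ C : ℝ, 0 < C ∧ ∀ a : ℝ, 0 ≤ a →
    ∀ f₁ f₂ h : SchwartzMap (EuclideanSpace ℝ (Fin d)) ℂ,
    ∀ ξ : EuclideanSpace ℝ (Fin d),
    ‖𝓕 (fun x => (∫ y : EuclideanSpace ℝ (Fin d),
      ((Real.exp (-(a * ‖y‖)) * ‖y‖ ^ (-γ) : ℝ) : ℂ) *
        (f₁ (x - y) * (starRingEnd ℂ) (f₂ (x - y)))) * h x) ξ‖ₑ ≤
      (∫⁻ z, ‖f₁ z‖ₑ * ‖f₂ z‖ₑ) *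
      ∫⁻ η, ENNReal.ofReal (C * ‖ξ - η‖ ^ (γ - d)) * ‖𝓕 (⇑h) η‖ₑ := by
  have : Nonempty (Fin d) := ⟨⟨0, hd⟩⟩
  obtain ⟨C, hC, hCb⟩ := aux_inner d hd γ hγ0 hγ
  refine ⟨C, hC, fun a ha f₁ f₂ h ξ => ?_⟩
  have hcont : Continuous h := h.continuous
  have hc1 : Continuous f₁ := f₁.continuous
  have hc2 : Continuous f₂ := f₂.continuous
  obtain ⟨M, hM, hMb⟩ := aux_kernel_bdd d hd γ hγ0 hγ h
  let g : EuclideanSpace ℝ (Fin d) → ℂ := fun z => f₁ z * (starRingEnd ℂ) (f₂ z)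
  have hgc : Continuous g := by
    have : Continuous (fun z => (starRingEnd ℂ) (f₂ z)) := Complex.continuous_conj.comp hc2
    exact hc1.mul this
  have hgn : ∀ z, ‖g z‖ₑ = ‖f₁ z‖ₑ * ‖f₂ z‖ₑ := by
    intro z
    simp only [g]
    rw [enorm_mul]
    congr 1
    rw [← ofReal_norm, RCLike.norm_conj, ofReal_norm]
  obtain ⟨B, hB⟩ : ∃ B : ℝ, ∀ x, ‖f₁ x‖ ≤ B := by
    refine ⟨SchwartzMap.seminorm ℝ 0 0 f₁, fun x => ?_⟩
    simpa using SchwartzMap.le_seminorm ℝ 0 0 f₁ x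
  have hgfin : ∫⁻ z, ‖g z‖ₑ < ∞ := by
    simp_rw [hgn]
    calc _ ≤ ∫⁻ z, ENNReal.ofReal B * ‖f₂ z‖ₑ := by
          refine lintegral_mono fun z => ?_
          gcongr
          rw [← ofReal_norm]
          exact ENNReal.ofReal_le_ofReal (hB z)
      _ = ENNReal.ofReal B * ∫⁻ z, ‖f₂ z‖ₑ := lintegral_const_mul _ (by fun_prop)
      _ < ∞ := ENNReal.mul_lt_top ENNReal.ofReal_lt_top f₂.integrable.2
  let K : EuclideanSpace ℝ (Fin d) → ℝ := fun y => Real.exp (-(a * ‖y‖)) * ‖y‖ ^ (-γ)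
  have hKm : Measurable K := by fun_prop
  have hK0 : ∀ y, 0 ≤ K y := fun y => by simp only [K]; positivity
  let F : EuclideanSpace ℝ (Fin d) → EuclideanSpace ℝ (Fin d) → ℂ := fun x z =>
    g z * (𝐞 (-inner ℝ x ξ) • (h x * (K (x - z) : ℂ)))
  have hchar : Continuous (fun q : EuclideanSpace ℝ (Fin d) × EuclideanSpace ℝ (Fin d) =>
      (𝐞 (-inner ℝ q.1 ξ) : ℂ)) :=
    continuous_subtype_val.comp (Real.continuous_fourierChar.comp (by fun_prop))
  have hFm : Measurable (Function.uncurry F) := by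
    have h1 : Measurable (fun q : EuclideanSpace ℝ (Fin d) × EuclideanSpace ℝ (Fin d) =>
      (K (q.1 - q.2) : ℂ)) := Complex.measurable_ofReal.comp (hKm.comp (by fun_prop))
    have h2 : Measurable (fun q : EuclideanSpace ℝ (Fin d) × EuclideanSpace ℝ (Fin d) =>
      g q.2) := (hgc.comp continuous_snd).measurable
    have h3 : Measurable (fun q : EuclideanSpace ℝ (Fin d) × EuclideanSpace ℝ (Fin d) =>
      h q.1) := (hcont.comp continuous_fst).measurable
    exact h2.mul (hchar.measurable.mul (h3.mul h1))
  have hFn : ∀ x z, ‖F x z‖ₑ = ‖g z‖ₑ * (‖h x‖ₑ * ENNReal.ofReal (K (x - z))) := by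
    intro x z
    change ‖g z * _‖ₑ = _
    rw [enorm_mul (g z), aux_enorm_circle, enorm_mul (h x), ← ofReal_norm (Complex.ofReal _),
      Complex.norm_real, Real.norm_of_nonneg (hK0 _)]
  have hFi : Integrable (Function.uncurry F) (volume.prod volume) := by
    refine ⟨hFm.aestronglyMeasurable, ?_⟩
    rw [HasFiniteIntegral, lintegral_prod_symm _ hFm.enorm.aemeasurable]
    simp only [Function.uncurry]
    simp_rw [hFn]
    calc _ ≤ ∫⁻ z, ‖g z‖ₑ * M := by
          refine lintegral_mono fun z => ?_
          rw [lintegral_const_mul _ (by fun_prop)]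
          gcongr
          refine le_trans (lintegral_mono fun x => ?_) (hMb z)
          gcongr
          exact aux_kernel_le _ _ _ ha (norm_nonneg _)
      _ = (∫⁻ z, ‖g z‖ₑ) * M := lintegral_mul_const _ (by fun_prop)
      _ < ∞ := ENNReal.mul_lt_top hgfin hM
  have hstart : 𝓕 (fun x => (∫ y : EuclideanSpace ℝ (Fin d),
      ((Real.exp (-(a * ‖y‖)) * ‖y‖ ^ (-γ) : ℝ) : ℂ) *
        (f₁ (x - y) * (starRingEnd ℂ) (f₂ (x - y)))) * h x) ξ = ∫ x, ∫ z, F x z := by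
    rw [Real.fourier_eq]
    congr 1
    ext x
    rw [← integral_sub_left_eq_self _ volume x]
    simp only [F, Circle.smul_def, smul_eq_mul, sub_sub_cancel]
    rw [← integral_mul_const, ← integral_const_mul]
    congr 1
    ext z
    simp only [K, g]
    ring
  rw [hstart, integral_integral_swap hFi]
  calc _ ≤ ∫⁻ z, ‖∫ x, F x z‖ₑ := enorm_integral_le_lintegral_enorm _
    _ ≤ ∫⁻ z, ‖f₁ z‖ₑ * ‖f₂ z‖ₑ *
        ∫⁻ η, ENNReal.ofReal (C * ‖ξ - η‖ ^ (γ - d)) * ‖𝓕 (⇑h) η‖ₑ := by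
        refine lintegral_mono fun z => ?_
        simp only [F]
        rw [integral_const_mul, enorm_mul, hgn]
        gcongr
        exact hCb a ha h z ξ
    _ = _ := lintegral_mul_const _ (by fun_prop)


lemma aux_young_pt {d : ℕ} (A B : EuclideanSpace ℝ (Fin d) → ℝ≥0∞) (hA : Measurable A)
    (hB : Measurable B) (w1 w2 w3 : ℝ) (h1 : 0 ≤ w1) (h2 : 0 ≤ w2) (h3 : 0 ≤ w3)
    (hw : w1 + w2 + w3 = 1) (x : EuclideanSpace ℝ (Fin d)) :
    ∫⁻ y, A (x - y) ^ (w1 + w2) * B y ^ (w1 + w3) ≤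
      (∫⁻ y, A (x - y) * B y) ^ w1 * ((∫⁻ y, A y) ^ w2 * (∫⁻ y, B y) ^ w3) := by
  have hA' : Measurable (fun y => A (x - y)) := hA.comp (by fun_prop)
  have key := ENNReal.lintegral_prod_norm_pow_le (μ := (volume : Measure (EuclideanSpace ℝ (Fin d))))
    (Finset.univ : Finset (Fin 3))
    (f := ![fun y => A (x - y) * B y, fun y => A (x - y), B]) (p := ![w1, w2, w3])
    (by
      intro i _
      fin_cases i
      · exact (hA'.mul hB).aemeasurable
      · exact hA'.aemeasurable
      · exact hB.aemeasurable)
    (by simp [Fin.sum_univ_three, hw])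
    (by intro i _; fin_cases i <;> simpa)
  simp only [Fin.prod_univ_three, Matrix.cons_val_zero, Matrix.cons_val_one, Matrix.cons_val] at key
  rw [lintegral_sub_left_eq_self A x, mul_assoc] at key
  refine le_trans (le_of_eq (lintegral_congr fun y => ?_)) key
  rw [ENNReal.rpow_add_of_nonneg _ _ h1 h2, ENNReal.rpow_add_of_nonneg _ _ h1 h3,
    ENNReal.mul_rpow_of_nonneg _ _ h1]
  ring

lemma aux_young {d : ℕ} (A B : EuclideanSpace ℝ (Fin d) → ℝ≥0∞) (hA : Measurable A)
    (hB : Measurable B) (q : ℝ≥0∞) (hq : q ≠ 0) (w2 w3 : ℝ) (h2 : 0 ≤ w2) (h3 : 0 ≤ w3)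
    (hw : q.toReal⁻¹ + w2 + w3 = 1) :
    eLpNorm (fun x => ∫⁻ y, A (x - y) ^ (q.toReal⁻¹ + w2) * B y ^ (q.toReal⁻¹ + w3)) q volume ≤
      (∫⁻ y, A y) ^ (q.toReal⁻¹ + w2) * (∫⁻ y, B y) ^ (q.toReal⁻¹ + w3) := by
  have hpt := aux_young_pt A B hA hB q.toReal⁻¹ w2 w3 (by positivity) h2 h3 hw
  by_cases hqt : q = ∞
  · subst hqt
    rw [eLpNorm_exponent_top]
    refine eLpNormEssSup_le_of_ae_enorm_bound (Filter.Eventually.of_forall fun x => ?_)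
    simpa using hpt x
  · have hq0 : 0 < q.toReal := ENNReal.toReal_pos hq hqt
    have hm : Measurable (fun x => ∫⁻ y, A (x - y) * B y) := by
      refine Measurable.lintegral_prod_right' (f := fun p : EuclideanSpace ℝ (Fin d) ×
        EuclideanSpace ℝ (Fin d) => A (p.1 - p.2) * B p.2) ?_
      exact (hA.comp (by fun_prop)).mul (hB.comp measurable_snd)
    rw [eLpNorm_eq_lintegral_rpow_enorm_toReal hq hqt]
    set X := ∫⁻ y, A y with hX
    set Y := ∫⁻ y, B y with hY
    have hD : ∫⁻ x, ∫⁻ y, A (x - y) * B y = X * Y := by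
      rw [lintegral_lintegral_swap]
      · rw [← lintegral_const_mul _ hB]
        refine lintegral_congr fun y => ?_
        have hA' : Measurable (fun x => A (x - y)) := hA.comp (by fun_prop)
        rw [lintegral_mul_const _ hA', lintegral_sub_right_eq_self A y]
      · exact ((hA.comp (by fun_prop)).mul (hB.comp measurable_snd)).aemeasurable
    calc _ ≤ (∫⁻ x, (∫⁻ y, A (x - y) * B y) * (X ^ w2 * Y ^ w3) ^ q.toReal) ^ (1 / q.toReal) := by
          gcongr with x
          rw [enorm_eq_self]
          refine (ENNReal.rpow_le_rpow (hpt x) hq0.le).trans (le_of_eq ?_)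
          rw [ENNReal.mul_rpow_of_nonneg _ _ hq0.le, ENNReal.rpow_inv_rpow hq0.ne']
      _ = _ := by
          rw [lintegral_mul_const _ hm, hD, ENNReal.mul_rpow_of_nonneg _ _ (by positivity), one_div,
            ENNReal.rpow_rpow_inv hq0.ne', ENNReal.mul_rpow_of_nonneg _ _ (by positivity),
            ENNReal.rpow_add_of_nonneg _ _ (by positivity) h2,
            ENNReal.rpow_add_of_nonneg _ _ (by positivity) h3]
          ring

lemma aux_young_one {d : ℕ} (A f : EuclideanSpace ℝ (Fin d) → ℝ≥0∞) (hA : Measurable A)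
    (hf : Measurable f) (q : ℝ≥0∞) (hq : 1 ≤ q) :
    eLpNorm (fun x => ∫⁻ y, A (x - y) * f y) q volume ≤
      (∫⁻ y, A y) * eLpNorm f q volume := by
  have hq0' : q ≠ 0 := (zero_lt_one.trans_le hq).ne'
  by_cases hqt : q = ∞
  · subst hqt
    rw [eLpNorm_exponent_top]
    refine eLpNormEssSup_le_of_ae_enorm_bound (Filter.Eventually.of_forall fun x => ?_)
    rw [enorm_eq_self, eLpNorm_exponent_top]
    calc _ ≤ ∫⁻ y, A (x - y) * eLpNormEssSup f volume := by
          refine lintegral_mono_ae ?_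
          filter_upwards [enorm_ae_le_eLpNormEssSup f volume] with y hy
          gcongr
          simpa using hy
      _ = _ := by
        have hA' : Measurable (fun y => A (x - y)) := hA.comp (by fun_prop)
        rw [lintegral_mul_const _ hA', lintegral_sub_left_eq_self A x]
  · have hq0 : 0 < q.toReal := ENNReal.toReal_pos hq0' hqt
    have hq1 : 1 ≤ q.toReal := by
      rw [← ENNReal.toReal_one]; exact ENNReal.toReal_mono hqt hq
    have := aux_young A (fun y => f y ^ q.toReal) hA (hf.pow_const _) q hq0' (1 - q.toReal⁻¹) 0
      (by have := inv_le_one_of_one_le₀ hq1; linarith) le_rfl (by ring)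
    simp only [add_sub_cancel, add_zero, ENNReal.rpow_one, ENNReal.rpow_rpow_inv hq0.ne'] at this
    refine this.trans (le_of_eq ?_)
    rw [eLpNorm_eq_lintegral_rpow_enorm_toReal hq0' hqt]
    simp

lemma aux_far (d : ℕ) (β : ℝ) (hβ : (d:ℝ) < β) :
    ∫⁻ x, (Metric.ball (0 : EuclideanSpace ℝ (Fin d)) 1)ᶜ.indicator
      (fun x => ENNReal.ofReal (‖x‖ ^ (-β))) x < ∞ := by
  have hβ0 : 0 < β := lt_of_le_of_lt (Nat.cast_nonneg d) hβ
  have h := finite_integral_one_add_norm (E := EuclideanSpace ℝ (Fin d)) (μ := volume) (r := β)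
    (by simpa using hβ)
  calc _ ≤ ∫⁻ x : EuclideanSpace ℝ (Fin d),
        ENNReal.ofReal (2 ^ β) * ENNReal.ofReal ((1 + ‖x‖) ^ (-β)) := by
        refine lintegral_mono fun x => ?_
        by_cases hx : x ∈ (Metric.ball (0 : EuclideanSpace ℝ (Fin d)) 1)ᶜ
        swap
        · rw [Set.indicator_of_notMem hx]; exact zero_le
        rw [Set.indicator_of_mem hx]
        have h1 : 1 ≤ ‖x‖ := by simpa using hx
        rw [← ENNReal.ofReal_mul (by positivity)]
        refine ENNReal.ofReal_le_ofReal ?_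
        have h2 : ((1 + ‖x‖) / 2) ^ β ≤ ‖x‖ ^ β :=
          Real.rpow_le_rpow (by positivity) (by linarith) hβ0.le
        rw [Real.div_rpow (by positivity) (by norm_num)] at h2
        rw [Real.rpow_neg (by positivity), Real.rpow_neg (by positivity)]
        have h4 : 0 < (1 + ‖x‖) ^ β := by positivity
        have h5 : (0:ℝ) < 2 ^ β := by positivity
        calc (‖x‖ ^ β)⁻¹ ≤ ((1 + ‖x‖) ^ β / 2 ^ β)⁻¹ := inv_anti₀ (by positivity) h2
          _ = _ := by rw [inv_div]; rfl
    _ = _ := lintegral_const_mul _ (by fun_prop)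
    _ < ∞ := ENNReal.mul_lt_top ENNReal.ofReal_lt_top h

lemma aux_l2 (d : ℕ) (f g : SchwartzMap (EuclideanSpace ℝ (Fin d)) ℂ) :
    ∫⁻ z, ‖f z‖ₑ * ‖g z‖ₑ ≤ eLpNorm (⇑f) 2 volume * eLpNorm (⇑g) 2 volume := by
  have hf : Measurable (⇑f) := f.continuous.measurable
  have hg : Measurable (⇑g) := g.continuous.measurable
  rw [eLpNorm_eq_lintegral_rpow_enorm_toReal two_ne_zero ENNReal.ofNat_ne_top,
    eLpNorm_eq_lintegral_rpow_enorm_toReal two_ne_zero ENNReal.ofNat_ne_top]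
  exact ENNReal.lintegral_mul_le_Lp_mul_Lq volume (by simpa using Real.HolderConjugate.two_two)
    hf.enorm.aemeasurable hg.enorm.aemeasurable

lemma aux_planch (d : ℕ) (f : SchwartzMap (EuclideanSpace ℝ (Fin d)) ℂ) :
    eLpNorm (𝓕 (⇑f)) 2 volume = eLpNorm (⇑f) 2 volume := by
  have h := SchwartzMap.norm_fourier_toL2_eq f
  rw [SchwartzMap.norm_toLp, SchwartzMap.norm_toLp,
    ENNReal.toReal_eq_toReal_iff' (SchwartzMap.memLp _ _ _).2.ne (SchwartzMap.memLp _ _ _).2.ne] at h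
  exact h


lemma aux_conv_meas {d : ℕ} (A B : EuclideanSpace ℝ (Fin d) → ℝ≥0∞) (hA : Measurable A)
    (hB : Measurable B) : Measurable (fun x => ∫⁻ y, A (x - y) * B y) := by
  refine Measurable.lintegral_prod_right' (f := fun p : EuclideanSpace ℝ (Fin d) ×
    EuclideanSpace ℝ (Fin d) => A (p.1 - p.2) * B p.2) ?_
  exact (hA.comp (by fun_prop)).mul (hB.comp measurable_snd)

/-- Riesz potential estimate after splitting the kernel. -/
lemma aux_riesz (d : ℕ) (hd : 1 ≤ d) (q : ℝ≥0∞) (hq : 1 ≤ q) (γ : ℝ) (hγ0 : 0 < γ)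
    (hqw : q.toReal⁻¹ < 1 / 2) (hγ : γ < d * (1 / 2 - q.toReal⁻¹)) :
    ∃ K : ℝ≥0∞, K ≠ ∞ ∧ ∀ h : SchwartzMap (EuclideanSpace ℝ (Fin d)) ℂ,
      eLpNorm (fun ξ => ∫⁻ η, ENNReal.ofReal (‖ξ - η‖ ^ (γ - d)) * ‖𝓕 (⇑h) η‖ₑ) q volume ≤
        K * max (eLpNorm (𝓕 (⇑h)) q volume) (eLpNorm (⇑h) 2 volume) := by
  set w := q.toReal⁻¹ with hw
  have hw0 : 0 ≤ w := by positivity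
  have hd0 : (0:ℝ) < d := by exact_mod_cast hd
  set S := Metric.ball (0 : EuclideanSpace ℝ (Fin d)) 1 with hS
  have hSm : MeasurableSet S := Metric.isOpen_ball.measurableSet
  set β := (d - γ) / (w + 1 / 2) with hβ
  have hβd : (d:ℝ) < β := by
    rw [hβ, lt_div_iff₀ (by positivity)]; nlinarith
  set L : EuclideanSpace ℝ (Fin d) → ℝ≥0∞ :=
    S.indicator (fun x => ENNReal.ofReal (‖x‖ ^ (-(d - γ)))) with hL
  set H : EuclideanSpace ℝ (Fin d) → ℝ≥0∞ :=
    Sᶜ.indicator (fun x => ENNReal.ofReal (‖x‖ ^ (-β))) with hH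
  have hLm : Measurable L := Measurable.indicator (by fun_prop) hSm
  have hHm : Measurable H := Measurable.indicator (by fun_prop) hSm.compl
  have hLf : ∫⁻ x, L x < ∞ := by
    rw [hL, lintegral_indicator hSm]
    exact aux_ball d hd (d - γ) (by linarith)
  have hHf : ∫⁻ x, H x < ∞ := aux_far d β hβd
  have hsplit : ∀ x, ENNReal.ofReal (‖x‖ ^ (γ - d)) = L x + H x ^ (w + 1 / 2) := by
    intro x
    have hpos : 0 < w + 1 / 2 := by positivity
    by_cases hx : x ∈ S
    · have hx' : x ∉ Sᶜ := fun h => h hx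
      rw [hL, hH, Set.indicator_of_mem hx, Set.indicator_of_notMem hx',
        ENNReal.zero_rpow_of_pos hpos, add_zero, neg_sub]
    · have hx' : x ∈ Sᶜ := hx
      rw [hL, hH, Set.indicator_of_mem hx', Set.indicator_of_notMem hx, zero_add,
        ENNReal.ofReal_rpow_of_nonneg (by positivity) hpos.le, ← Real.rpow_mul (norm_nonneg x),
        hβ, neg_mul, div_mul_cancel₀ _ hpos.ne', neg_sub]
  refine ⟨(∫⁻ x, L x) + (∫⁻ x, H x) ^ (w + 1 / 2),
    ENNReal.add_ne_top.2 ⟨hLf.ne, ENNReal.rpow_ne_top_of_nonneg (by positivity) hHf.ne⟩, ?_⟩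
  intro h
  have hFm : Measurable (𝓕 (⇑h)) :=
    (𝓕 h : SchwartzMap (EuclideanSpace ℝ (Fin d)) ℂ).continuous.measurable
  have hFe : Measurable (fun η => ‖𝓕 (⇑h) η‖ₑ) := hFm.enorm
  have hHp : Measurable (fun x => H x ^ (w + 1 / 2)) := hHm.pow_const _
  have e1 : (fun ξ => ∫⁻ η, ENNReal.ofReal (‖ξ - η‖ ^ (γ - d)) * ‖𝓕 (⇑h) η‖ₑ) =
      (fun ξ => ∫⁻ η, L (ξ - η) * ‖𝓕 (⇑h) η‖ₑ) +
      (fun ξ => ∫⁻ η, H (ξ - η) ^ (w + 1 / 2) * ‖𝓕 (⇑h) η‖ₑ) := by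
    funext ξ
    have hLx : Measurable (fun η => L (ξ - η)) := hLm.comp (by fun_prop)
    have hLx2 : Measurable (fun η => L (ξ - η) * ‖𝓕 (⇑h) η‖ₑ) := hLx.mul hFe
    rw [Pi.add_apply, ← lintegral_add_left hLx2]
    refine lintegral_congr fun η => ?_
    rw [hsplit, add_mul]
  have b1 := aux_young_one L (fun η => ‖𝓕 (⇑h) η‖ₑ) hLm hFe q hq
  have b2 := aux_young H (fun η => ‖𝓕 (⇑h) η‖ₑ ^ (2:ℝ)) hHm (hFe.pow_const _) q
    (zero_lt_one.trans_le hq).ne' (1 / 2) (1 / 2 - w) (by norm_num) (by linarith) (by rw [← hw]; ring)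
  rw [← hw] at b2
  have e2 : w + (1 / 2 - w) = 2⁻¹ := by ring
  rw [e2] at b2
  simp only [ENNReal.rpow_rpow_inv (two_ne_zero : (2:ℝ) ≠ 0)] at b2
  have e3 : (∫⁻ y, ‖𝓕 (⇑h) y‖ₑ ^ (2:ℝ)) ^ (2⁻¹:ℝ) = eLpNorm (⇑h) 2 volume := by
    rw [← aux_planch, eLpNorm_eq_lintegral_rpow_enorm_toReal two_ne_zero ENNReal.ofNat_ne_top]
    simp
  rw [e3] at b2
  have e4 : eLpNorm (fun η => ‖𝓕 (⇑h) η‖ₑ) q volume = eLpNorm (𝓕 (⇑h)) q volume :=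
    eLpNorm_enorm _
  rw [e4] at b1
  rw [e1, add_mul]
  refine (eLpNorm_add_le (aux_conv_meas L _ hLm hFe).aestronglyMeasurable
    (aux_conv_meas _ _ hHp hFe).aestronglyMeasurable hq).trans ?_
  refine add_le_add (b1.trans ?_) (b2.trans ?_)
  · gcongr; exact le_max_left _ _
  · gcongr; exact le_max_right _ _


/-- For `1 ≤ p < 2` and `0 < γ < d(1/p - 1/2)`:
`‖H_{a,γ}(f₁,f₂,f₃)‖_{L̂^p} ≤ C ‖f₁‖_{L²} ‖f₂‖_{L²} max(‖f₃‖_{L̂^p}, ‖f₃‖_{L²})`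
for Schwartz functions, with `C = C(d,γ,p)` independent of `a ≥ 0`;
here `‖f‖_{L̂^p} = ‖𝓕 f‖_{L^{p'}}` with `1/p + 1/p' = 1`. -/
theorem hartree_fourier_lebesgue_estimate_low (d : ℕ) (hd : 1 ≤ d)
    (p p' : ℝ≥0∞) (hp1 : 1 ≤ p) (hp2 : p < 2) (hpp' : 1 / p + 1 / p' = 1)
    (γ : ℝ) (hγ0 : 0 < γ) (hγ : γ < d * (1 / p.toReal - 1 / 2)) :
    ∃ C : ℝ, 0 < C ∧ ∀ a : ℝ, 0 ≤ a →
      ∀ f₁ f₂ f₃ : SchwartzMap (EuclideanSpace ℝ (Fin d)) ℂ,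
        eLpNorm (𝓕 (hartreeOp d a γ (⇑f₁) (⇑f₂) (⇑f₃))) p' volume ≤
          ENNReal.ofReal C * eLpNorm (⇑f₁) 2 volume * eLpNorm (⇑f₂) 2 volume *
            max (eLpNorm (𝓕 (⇑f₃)) p' volume) (eLpNorm (⇑f₃) 2 volume) := by
  have hd0 : (0:ℝ) < d := by exact_mod_cast hd
  have hpt : p ≠ ∞ := (hp2.trans ENNReal.ofNat_lt_top).ne
  have hp0 : p ≠ 0 := (zero_lt_one.trans_le hp1).ne'
  have hq1 : 1 ≤ p' := by
    have : 1 / p' ≤ 1 := (le_add_self : 1 / p' ≤ 1 / p + 1 / p').trans hpp'.le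
    rw [one_div] at this
    exact ENNReal.inv_le_one.1 this
  have hreal : p.toReal⁻¹ + p'.toReal⁻¹ = 1 := by
    have h := congrArg ENNReal.toReal hpp'
    rw [one_div, one_div, ENNReal.toReal_add (by simpa using hp0)
      (by simpa using (zero_lt_one.trans_le hq1).ne'), ENNReal.toReal_inv, ENNReal.toReal_inv] at h
    simpa using h
  have hpr : p.toReal < 2 := by
    have := (ENNReal.toReal_lt_toReal hpt ENNReal.ofNat_ne_top).2 hp2
    simpa using this
  have hpp : 0 < p.toReal := ENNReal.toReal_pos hp0 hpt
  have hinv : 1 / 2 < p.toReal⁻¹ := by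
    rw [one_div]; exact inv_strictAnti₀ hpp hpr
  have hw0 : 0 ≤ p'.toReal⁻¹ := by positivity
  have hγ' : γ < d * (1 / 2 - p'.toReal⁻¹) := by
    have : (1 / 2 - p'.toReal⁻¹) = 1 / p.toReal - 1 / 2 := by rw [one_div p.toReal]; linarith
    rwa [this]
  have hγd : γ < d := by nlinarith
  obtain ⟨K, hK, hR⟩ := aux_riesz d hd p' hq1 γ hγ0 (by linarith) hγ'
  obtain ⟨C, hC, hP⟩ := aux_pointwise d hd γ hγ0 hγd
  refine ⟨C * (K.toReal + 1), by positivity, ?_⟩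
  intro a ha f₁ f₂ f₃
  have hFe : Measurable (fun η => ‖𝓕 (⇑f₃) η‖ₑ) :=
    (𝓕 f₃ : SchwartzMap (EuclideanSpace ℝ (Fin d)) ℂ).continuous.measurable.enorm
  have hker : Measurable (fun x : EuclideanSpace ℝ (Fin d) => ENNReal.ofReal (‖x‖ ^ (γ - d))) := by
    fun_prop
  have hm := aux_conv_meas _ _ hker hFe
  have hpt2 : ∀ ξ, ‖𝓕 (hartreeOp d a γ (⇑f₁) (⇑f₂) (⇑f₃)) ξ‖ₑ ≤
      ((∫⁻ z, ‖f₁ z‖ₑ * ‖f₂ z‖ₑ) * ENNReal.ofReal C) *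
      ‖∫⁻ η, ENNReal.ofReal (‖ξ - η‖ ^ (γ - d)) * ‖𝓕 (⇑f₃) η‖ₑ‖ₑ := by
    intro ξ
    refine (hP a ha f₁ f₂ f₃ ξ).trans (le_of_eq ?_)
    rw [enorm_eq_self, mul_assoc, ← lintegral_const_mul' _ _ ENNReal.ofReal_ne_top]
    congr 1
    refine lintegral_congr fun η => ?_
    rw [ENNReal.ofReal_mul hC.le, mul_assoc]
  have hmain : eLpNorm (𝓕 (hartreeOp d a γ (⇑f₁) (⇑f₂) (⇑f₃))) p' volume ≤
      ((∫⁻ z, ‖f₁ z‖ₑ * ‖f₂ z‖ₑ) * ENNReal.ofReal C) *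
      eLpNorm (fun ξ => ∫⁻ η, ENNReal.ofReal (‖ξ - η‖ ^ (γ - d)) * ‖𝓕 (⇑f₃) η‖ₑ) p' volume :=
    eLpNorm_le_mul_eLpNorm_of_ae_le_mul'' p' hm.aestronglyMeasurable
      (Filter.Eventually.of_forall hpt2)
  refine hmain.trans ?_
  have hKle : K ≤ ENNReal.ofReal (K.toReal + 1) := by
    conv_lhs => rw [← ENNReal.ofReal_toReal hK]
    exact ENNReal.ofReal_le_ofReal (by linarith)
  calc _ ≤ ((eLpNorm (⇑f₁) 2 volume * eLpNorm (⇑f₂) 2 volume) * ENNReal.ofReal C) *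
        (ENNReal.ofReal (K.toReal + 1) *
          max (eLpNorm (𝓕 (⇑f₃)) p' volume) (eLpNorm (⇑f₃) 2 volume)) := by
        refine mul_le_mul' (mul_le_mul' (aux_l2 d f₁ f₂) le_rfl) ((hR f₃).trans ?_)
        exact mul_le_mul' hKle le_rfl
    _ = _ := by
        rw [ENNReal.ofReal_mul hC.le]
        ring
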